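/- For every λ ∈ ℂ with Im λ > 0: (a) ∫₀^{1/2} |b_λ(t)| Δ(t) dt < ∞; (b) if moreover Im λ > ρ then ∫₀^∞ |b_λ(t)| Δ(t) dt < ∞; (c) ∫_{1/2}^∞ |b_λ(t)|² Δ(t) dt < ∞; (d) there exists p with 1 ≤ p < 2 (depending on λ) such that ∫_{1/2}^∞ |b_λ(t)|^p Δ(t) dt < ∞. -/

import Mathlib

open Complex MeasureTheory Set

noncomputable section

/-- Gauss hypergeometric function ₂F₁ as a power series sum. -/
def hyp (a b c x : ℂ) : ℂ :=
  ∑' n : ℕ, (ascPochhammer ℂ n).eval a * (ascPochhammer ℂ n).eval b /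
    ((ascPochhammer ℂ n).eval c * (n.factorial : ℂ)) * x ^ n

/-- ρ = (m₁ + 2 m₂)/2 -/
def rho (m₁ m₂ : ℕ) : ℝ := ((m₁ : ℝ) + 2 * m₂) / 2

/-- Δ(t) = (2 sinh t)^(m₁+m₂) (2 cosh t)^(m₂) -/
def Del (m₁ m₂ : ℕ) (t : ℝ) : ℝ :=
  (2 * Real.sinh t) ^ (m₁ + m₂) * (2 * Real.cosh t) ^ m₂

/-- The solution Φ_λ. -/
def Phi (m₁ m₂ : ℕ) (l : ℂ) (t : ℝ) : ℂ :=
  ((2 * Real.cosh t : ℝ) : ℂ) ^ (Complex.I * l - (rho m₁ m₂ : ℂ)) *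
    hyp (((rho m₁ m₂ : ℂ) - Complex.I * l) / 2) (((m₁ : ℂ) + 2) / 4 - Complex.I * l / 2)
      (1 - Complex.I * l) ((((Real.cosh t) ^ 2 : ℝ) : ℂ))⁻¹

/-- The function b_λ. -/
def bfun (m₁ m₂ : ℕ) (l : ℂ) (t : ℝ) : ℂ :=
  (2 : ℂ) ^ (-(rho m₁ m₂ : ℂ) - 1 - Complex.I * l) *
    (Complex.Gamma (((rho m₁ m₂ : ℂ) - Complex.I * l) / 2) *
      Complex.Gamma (((m₁ : ℂ) + 2) / 4 - Complex.I * l / 2) /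
      (Complex.Gamma (((m₁ : ℂ) + (m₂ : ℂ) + 1) / 2) * Complex.Gamma (1 - Complex.I * l))) *
    Phi m₁ m₂ l t

/-!
Euler's limit `n ^ s * n! / (s)ₙ₊₁ → Γ(s)` shows that the Taylor coefficients of `₂F₁(a, b; c; ·)`
are `O(n ^ (Re (a + b - c) - 1))`. For `s > 0` with `Re (a + b - c) ≤ s` they are therefore
dominated by those of `(1 - x) ^ (-s)`, so that `₂F₁(a, b; c; x) = O((1 - |x|) ^ (-s))` on the unit
disc. For `Φ_λ` one has `Re (a + b - c) = (m₁ + m₂ - 1) / 2`; taking `s = (m₁ + m₂) / 2` and using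
`1 - (cosh t)⁻² = (tanh t)²` gives
`b_λ(t) = O((2 cosh t) ^ (-(Im λ + ρ)) * (tanh t) ^ (-(m₁ + m₂)))` for `t > 0`.
As `Δ(t) = (2 cosh t) ^ (2ρ) * (tanh t) ^ (m₁ + m₂)`, the singularity at `0` cancels in `|b_λ| Δ`,
while away from `0` the function `|b_λ| ^ q Δ` is `O((2 cosh t) ^ (2ρ - q (Im λ + ρ)))`, which is
integrable as soon as `2ρ < q (Im λ + ρ)`. At `q = 2` this strict inequality reads `0 < Im λ`, and
it persists for `q` slightly below `2`.
-/

section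

open Asymptotics Filter

/-- The `n`-th Taylor coefficient of the Gauss hypergeometric function `hyp a b c`, isolated so that
its growth in `n` can be estimated. When `c = -k` with `k : ℕ`, the coefficients with `n > k` are
`0` by the convention `x / 0 = 0`. -/
def hypCoeff (a b c : ℂ) (n : ℕ) : ℂ :=
  (ascPochhammer ℂ n).eval a * (ascPochhammer ℂ n).eval b /
    ((ascPochhammer ℂ n).eval c * (n.factorial : ℂ))

theorem ascPochhammer_eval_eq_prod_range {R : Type*} [CommSemiring R] (r : R) (n : ℕ) :
    (ascPochhammer R n).eval r = ∏ j ∈ Finset.range n, (r + j) := by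
  induction n with
  | zero => simp
  | succ n ih => rw [ascPochhammer_succ_eval, ih, Finset.prod_range_succ]

theorem norm_GammaSeq (a : ℂ) {n : ℕ} (hn : 0 < n) :
    ‖GammaSeq a n‖ = n ^ a.re * n.factorial / ‖(ascPochhammer ℂ (n + 1)).eval a‖ := by
  rw [GammaSeq, ascPochhammer_eval_eq_prod_range, norm_div, norm_mul,
    norm_natCast_cpow_of_pos hn, Complex.norm_natCast]

theorem isBigO_inv_ascPochhammer_succ_eval (a : ℂ) :
    (fun n : ℕ ↦ ((ascPochhammer ℂ (n + 1)).eval a)⁻¹) =O[atTop]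
      fun n ↦ ((n : ℝ) ^ a.re * n.factorial)⁻¹ := by
  have hΓ : GammaSeq a =O[atTop] fun _ ↦ (1 : ℝ) := (GammaSeq_tendsto_Gamma a).isBigO_one ℝ
  refine (hΓ.norm_left.mul (isBigO_refl (fun n : ℕ ↦ ((n : ℝ) ^ a.re * n.factorial)⁻¹) _)).congr'
    ?_ (by simp) |>.of_norm_left
  filter_upwards [eventually_gt_atTop 0] with n hn
  rw [norm_GammaSeq a hn, norm_inv]
  field_simp

theorem isBigO_ascPochhammer_succ_eval (a : ℂ) :
    (fun n : ℕ ↦ (ascPochhammer ℂ (n + 1)).eval a) =O[atTop]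
      fun n ↦ (n : ℝ) ^ a.re * n.factorial := by
  by_cases ha : ∃ m : ℕ, a = -m
  · obtain ⟨m, rfl⟩ := ha
    refine (isBigO_zero _ _).congr' ?_ .rfl
    filter_upwards [eventually_ge_atTop m] with n hn
    exact ((ascPochhammer_eval_eq_zero_iff _ _).2 ⟨m, by omega, by simp⟩).symm
  · have hΓ : (fun n ↦ (GammaSeq a n)⁻¹) =O[atTop] fun _ ↦ (1 : ℝ) :=
      ((GammaSeq_tendsto_Gamma a).inv₀ (Gamma_ne_zero fun m hm ↦ ha ⟨m, hm⟩)).isBigO_one ℝ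
    refine (hΓ.norm_left.mul (isBigO_refl (fun n : ℕ ↦ (n : ℝ) ^ a.re * n.factorial) _)).congr'
      ?_ (by simp) |>.of_norm_left
    filter_upwards [eventually_gt_atTop 0] with n hn
    rw [norm_inv, norm_GammaSeq a hn]
    field_simp

theorem isBigO_rpow_mul_factorial_ascPochhammer_succ_eval {s : ℝ} (hs : 0 < s) :
    (fun n : ℕ ↦ (n : ℝ) ^ s * n.factorial) =O[atTop]
      fun n ↦ (ascPochhammer ℝ (n + 1)).eval s := by
  have hcast (n : ℕ) : (ascPochhammer ℂ n).eval (s : ℂ) = ((ascPochhammer ℝ n).eval s : ℝ) := by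
    simp [ascPochhammer_eval_eq_prod_range]
  have h := (isBigO_inv_ascPochhammer_succ_eval s).inv_rev
    (.of_forall fun n h ↦ absurd (hcast _ ▸ inv_eq_zero.1 h)
      (ofReal_ne_zero.2 (ascPochhammer_pos _ s hs).ne'))
  simp only [inv_inv, hcast, ofReal_re] at h
  exact isBigO_ofReal_right.1 h

theorem multichoose_eq_ascPochhammer_eval_div (s : ℝ) (n : ℕ) :
    Ring.multichoose s n = (ascPochhammer ℝ n).eval s / n.factorial := by
  rw [eq_div_iff (by positivity), mul_comm, ← nsmul_eq_mul,
    Ring.factorial_nsmul_multichoose_eq_ascPochhammer, Polynomial.ascPochhammer_smeval_eq_eval]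

theorem isBigO_hypCoeff_succ (a b c : ℂ) :
    (fun n ↦ hypCoeff a b c (n + 1)) =O[atTop]
      fun n : ℕ ↦ (n : ℝ) ^ (a + b - c).re * n.factorial * ((n + 1).factorial : ℝ)⁻¹ := by
  have hfac : (fun n : ℕ ↦ ((n + 1).factorial : ℂ)⁻¹) =O[atTop]
      fun n ↦ ((n + 1).factorial : ℝ)⁻¹ := isBigO_of_le _ fun n ↦ by simp
  refine ((((isBigO_ascPochhammer_succ_eval a).mul (isBigO_ascPochhammer_succ_eval b)).mul
    (isBigO_inv_ascPochhammer_succ_eval c)).mul hfac).congr' (.of_eq ?_) ?_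
  · funext n
    rw [hypCoeff, div_eq_mul_inv, mul_inv, mul_assoc _ (_)⁻¹]
  · filter_upwards [eventually_gt_atTop 0] with n hn
    have hn' : (0 : ℝ) < n := Nat.cast_pos.2 hn
    rw [sub_re, add_re, Real.rpow_sub hn', Real.rpow_add hn']
    field_simp

theorem isBigO_hypCoeff_multichoose {a b c : ℂ} {s : ℝ} (hs : 0 < s) (habc : (a + b - c).re ≤ s) :
    hypCoeff a b c =O[atTop] fun n ↦ Ring.multichoose s n := by
  rw [← map_add_atTop_eq_nat 1, isBigO_map]
  have hpow : (fun n : ℕ ↦ (n : ℝ) ^ (a + b - c).re) =O[atTop] fun n ↦ (n : ℝ) ^ s := by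
    refine .of_bound' ?_
    filter_upwards [eventually_ge_atTop 1] with n hn
    rw [Real.norm_of_nonneg (by positivity), Real.norm_of_nonneg (by positivity)]
    exact Real.rpow_le_rpow_of_exponent_le (by exact_mod_cast hn) habc
  refine (isBigO_hypCoeff_succ a b c).trans ?_
  simp only [Function.comp_def, multichoose_eq_ascPochhammer_eval_div, div_eq_mul_inv]
  exact ((hpow.mul (isBigO_refl _ _)).trans
    (isBigO_rpow_mul_factorial_ascPochhammer_succ_eval hs)).mul (isBigO_refl _ _)

theorem hasSum_multichoose_mul_pow (s : ℝ) {x : ℝ} (hx : |x| < 1) :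
    HasSum (fun n ↦ Ring.multichoose s n * x ^ n) ((1 - x) ^ (-s)) := by
  have h := (Real.one_div_one_sub_rpow_hasFPowerSeriesOnBall_zero s).hasSum (y := x)
    (by simpa [← ofReal_norm] using hx)
  simpa [FormalMultilinearSeries.ofScalars_apply_eq, ← Ring.multichoose_eq,
    Real.rpow_neg (sub_nonneg.2 (abs_lt.1 hx).2.le), mul_comm] using h

theorem isBigO_hyp {a b c : ℂ} {s : ℝ} (hs : 0 < s) (habc : (a + b - c).re ≤ s) :
    hyp a b c =O[𝓟 (Metric.ball 0 1)] fun x ↦ (1 - ‖x‖) ^ (-s) := by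
  have hpos (n : ℕ) : 0 < Ring.multichoose s n := by
    rw [multichoose_eq_ascPochhammer_eval_div]
    have := ascPochhammer_pos n s hs
    positivity
  obtain ⟨C, -, hC⟩ := bound_of_isBigO_nat_atTop (isBigO_hypCoeff_multichoose hs habc)
  refine isBigO_principal.2 ⟨C, fun x hx ↦ ?_⟩
  have hx1 : ‖x‖ < 1 := mem_ball_zero_iff.1 hx
  rw [Real.norm_of_nonneg (Real.rpow_nonneg (sub_nonneg.2 hx1.le) _)]
  refine tsum_of_norm_bounded ((hasSum_multichoose_mul_pow s (by simpa using hx1)).mul_left C)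
    fun n ↦ ?_
  have hn : ‖hypCoeff a b c n‖ ≤ C * Ring.multichoose s n := by
    simpa only [Real.norm_of_nonneg (hpos n).le] using hC (hpos n).ne'
  rw [← mul_assoc, norm_mul, norm_pow]
  gcongr
  exact hn

theorem measurable_hyp (a b c : ℂ) : Measurable (hyp a b c) :=
  Measurable.tsum fun _ ↦ by fun_prop

theorem integrableOn_of_isBigO_principal {α E F : Type*} [MeasurableSpace α]
    [NormedAddCommGroup E] [NormedAddCommGroup F] {μ : Measure α} {s : Set α} {f : α → E}
    {g : α → F} (hs : MeasurableSet s) (hf : AEStronglyMeasurable f (μ.restrict s))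
    (hfg : f =O[𝓟 s] g) (hg : IntegrableOn g s μ) : IntegrableOn f s μ := by
  obtain ⟨C, hC⟩ := isBigO_principal.1 hfg
  exact (hg.norm.const_mul C).mono' hf ((ae_restrict_mem hs).mono hC)

theorem strictMono_tanh : StrictMono Real.tanh := fun x y hxy ↦ by
  rw [Real.tanh_eq_sinh_div_cosh, Real.tanh_eq_sinh_div_cosh,
    div_lt_div_iff₀ (Real.cosh_pos x) (Real.cosh_pos y)]
  have hsinh : 0 < Real.sinh (y - x) := Real.sinh_pos_iff.2 (sub_pos.2 hxy)
  rw [Real.sinh_sub] at hsinh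
  linarith

theorem tanh_pos {t : ℝ} (ht : 0 < t) : 0 < Real.tanh t :=
  Real.tanh_zero ▸ strictMono_tanh ht

theorem one_sub_inv_cosh_sq (t : ℝ) : 1 - (Real.cosh t ^ 2)⁻¹ = Real.tanh t ^ 2 := by
  have := Real.cosh_pos t
  rw [Real.tanh_eq_sinh_div_cosh]
  field_simp
  linarith [Real.cosh_sq t]

theorem continuous_two_mul_cosh_rpow (e : ℝ) : Continuous fun t ↦ (2 * Real.cosh t) ^ e :=
  (Real.continuous_cosh.const_mul 2).rpow_const fun t ↦
    .inl (mul_pos two_pos (Real.cosh_pos t)).ne'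

theorem integrableOn_two_mul_cosh_rpow_Ioi {e : ℝ} (he : e < 0) (a : ℝ) :
    IntegrableOn (fun t ↦ (2 * Real.cosh t) ^ e) (Ioi a) := by
  refine (integrableOn_exp_mul_Ioi he a).mono'
    (continuous_two_mul_cosh_rpow e).aestronglyMeasurable (ae_of_all _ fun t ↦ ?_)
  have hexp : Real.exp t ≤ 2 * Real.cosh t := by
    rw [Real.cosh_eq]
    linarith [Real.exp_pos (-t)]
  have := Real.cosh_pos t
  rw [Real.norm_of_nonneg (by positivity), mul_comm e, Real.exp_mul]
  exact Real.rpow_le_rpow_of_nonpos (Real.exp_pos t) hexp he.le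

variable (m₁ m₂ : ℕ) (l : ℂ)

theorem Del_eq (t : ℝ) :
    Del m₁ m₂ t = (2 * Real.cosh t) ^ (2 * rho m₁ m₂) * Real.tanh t ^ (m₁ + m₂) := by
  have hrho : 2 * rho m₁ m₂ = (m₁ + m₂ + m₂ : ℕ) := by
    rw [rho]
    push_cast
    ring
  have hsinh : 2 * Real.sinh t = 2 * Real.cosh t * Real.tanh t := by
    rw [Real.tanh_eq_sinh_div_cosh]
    field_simp [(Real.cosh_pos t).ne']
  rw [hrho, Real.rpow_natCast, Del, hsinh]
  ring

theorem isBigO_Del :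
    Del m₁ m₂ =O[⊤] fun t ↦ (2 * Real.cosh t) ^ (2 * rho m₁ m₂) := by
  refine isBigO_of_le _ fun t ↦ ?_
  rw [Del_eq, norm_mul, norm_pow]
  exact mul_le_of_le_one_right (norm_nonneg _)
    (pow_le_one₀ (norm_nonneg _) (Real.abs_tanh_lt_one t).le)

theorem measurable_bfun : Measurable (bfun m₁ m₂ l) := by
  unfold bfun Phi
  refine .const_mul (.mul ?_ ?_) _
  · exact Measurable.pow_const (by fun_prop) _
  · exact (measurable_hyp _ _ _).comp (by fun_prop)

theorem measurable_norm_bfun_rpow_mul_Del (q : ℝ) :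
    Measurable fun t ↦ ‖bfun m₁ m₂ l t‖ ^ q * Del m₁ m₂ t := by
  have := measurable_bfun m₁ m₂ l
  unfold Del
  fun_prop

variable {m₁ m₂}

theorem isBigO_Phi (hm : 0 < m₁ + m₂) :
    Phi m₁ m₂ l =O[𝓟 (Ioi 0)] fun t ↦
      (2 * Real.cosh t) ^ (-(l.im + rho m₁ m₂)) * (Real.tanh t ^ (m₁ + m₂))⁻¹ := by
  have hmaps : Tendsto (fun t : ℝ ↦ (((Real.cosh t ^ 2 : ℝ) : ℂ))⁻¹) (𝓟 (Ioi 0))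
      (𝓟 (Metric.ball 0 1)) := by
    refine tendsto_principal_principal.2 fun t ht ↦ ?_
    rw [mem_ball_zero_iff, norm_inv, norm_real, Real.norm_of_nonneg (by positivity)]
    linarith [one_sub_inv_cosh_sq t, pow_pos (tanh_pos ht) 2]
  have habc : (((rho m₁ m₂ : ℂ) - I * l) / 2 + (((m₁ : ℂ) + 2) / 4 - I * l / 2) -
      (1 - I * l)).re ≤ ((m₁ + m₂ : ℕ) : ℝ) / 2 := by
    have heq : ((rho m₁ m₂ : ℂ) - I * l) / 2 + (((m₁ : ℂ) + 2) / 4 - I * l / 2) - (1 - I * l) =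
        (((m₁ + m₂ - 1) / 2 : ℝ) : ℂ) := by
      rw [rho]
      push_cast
      ring
    rw [heq, ofReal_re]
    push_cast
    linarith
  have hhyp := (isBigO_hyp (by positivity) habc).comp_tendsto hmaps
  have hcpow : (fun t : ℝ ↦ ((2 * Real.cosh t : ℝ) : ℂ) ^ (I * l - (rho m₁ m₂ : ℂ))) =O[𝓟 (Ioi 0)]
      fun t ↦ (2 * Real.cosh t) ^ (-(l.im + rho m₁ m₂)) := by
    refine isBigO_of_le _ fun t ↦ ?_
    have := Real.cosh_pos t
    rw [norm_cpow_eq_rpow_re_of_pos (by positivity), Real.norm_of_nonneg (by positivity)]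
    simp only [sub_re, mul_re, I_re, I_im, ofReal_re, neg_add', zero_mul, one_mul, zero_sub,
      le_refl]
  refine (hcpow.mul hhyp).congr' .rfl (eventually_principal.2 fun t ht ↦ ?_)
  have htanh := tanh_pos ht
  simp only [Function.comp_apply]
  rw [norm_inv, norm_real, Real.norm_of_nonneg (by positivity), one_sub_inv_cosh_sq,
    ← Real.rpow_natCast _ 2, ← Real.rpow_mul htanh.le, ← Real.rpow_natCast _ (m₁ + m₂),
    ← Real.rpow_neg htanh.le]
  ring_nf

theorem isBigO_bfun (hm : 0 < m₁ + m₂) :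
    bfun m₁ m₂ l =O[𝓟 (Ioi 0)] fun t ↦
      (2 * Real.cosh t) ^ (-(l.im + rho m₁ m₂)) * (Real.tanh t ^ (m₁ + m₂))⁻¹ :=
  (isBigO_Phi l hm).const_mul_left _

theorem isBigO_bfun_of_pos (hm : 0 < m₁ + m₂) {a : ℝ} (ha : 0 < a) :
    bfun m₁ m₂ l =O[𝓟 (Ioi a)] fun t ↦ (2 * Real.cosh t) ^ (-(l.im + rho m₁ m₂)) := by
  have htanh : (fun t ↦ (Real.tanh t ^ (m₁ + m₂))⁻¹) =O[𝓟 (Ioi a)] fun _ ↦ (1 : ℝ) := by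
    refine isBigO_principal.2 ⟨(Real.tanh a ^ (m₁ + m₂))⁻¹, fun t (hat : a < t) ↦ ?_⟩
    have hta := tanh_pos ha
    have htt := tanh_pos (ha.trans hat)
    rw [norm_one, mul_one, Real.norm_of_nonneg (by positivity)]
    gcongr
    exact (strictMono_tanh hat).le
  simpa only [mul_one] using ((isBigO_bfun l hm).mono
    (principal_mono.2 (Ioi_subset_Ioi ha.le))).trans ((isBigO_refl _ _).mul htanh)

theorem isBigO_norm_bfun_mul_Del (hm : 0 < m₁ + m₂) :
    (fun t ↦ ‖bfun m₁ m₂ l t‖ * Del m₁ m₂ t) =O[𝓟 (Ioi 0)]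
      fun t ↦ (2 * Real.cosh t) ^ (rho m₁ m₂ - l.im) := by
  refine ((isBigO_bfun l hm).norm_left.mul (isBigO_refl (Del m₁ m₂) _)).congr' .rfl
    (eventually_principal.2 fun t ht ↦ ?_)
  have := tanh_pos ht
  have := Real.cosh_pos t
  calc (2 * Real.cosh t) ^ (-(l.im + rho m₁ m₂)) * (Real.tanh t ^ (m₁ + m₂))⁻¹ * Del m₁ m₂ t
    _ = (2 * Real.cosh t) ^ (-(l.im + rho m₁ m₂)) * (2 * Real.cosh t) ^ (2 * rho m₁ m₂) := by
      rw [Del_eq]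
      field_simp
    _ = (2 * Real.cosh t) ^ (rho m₁ m₂ - l.im) := by
      rw [← Real.rpow_add (by positivity)]
      ring_nf

theorem integrableOn_norm_bfun_mul_Del_Ioc (hm : 0 < m₁ + m₂) (T : ℝ) :
    IntegrableOn (fun t ↦ ‖bfun m₁ m₂ l t‖ * Del m₁ m₂ t) (Ioc 0 T) := by
  have hmeas : Measurable fun t ↦ ‖bfun m₁ m₂ l t‖ * Del m₁ m₂ t := by
    simpa only [Real.rpow_one] using measurable_norm_bfun_rpow_mul_Del m₁ m₂ l 1
  exact integrableOn_of_isBigO_principal measurableSet_Ioc hmeas.aestronglyMeasurable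
    ((isBigO_norm_bfun_mul_Del l hm).mono (principal_mono.2 Ioc_subset_Ioi_self))
    (continuous_two_mul_cosh_rpow _).integrableOn_Ioc

theorem integrableOn_norm_bfun_rpow_mul_Del_Ioi (hm : 0 < m₁ + m₂) {q : ℝ} (hq : 0 ≤ q)
    (hlq : 2 * rho m₁ m₂ < q * (l.im + rho m₁ m₂)) {a : ℝ} (ha : 0 < a) :
    IntegrableOn (fun t ↦ ‖bfun m₁ m₂ l t‖ ^ q * Del m₁ m₂ t) (Ioi a) := by
  have hO : (fun t ↦ ‖bfun m₁ m₂ l t‖ ^ q * Del m₁ m₂ t) =O[𝓟 (Ioi a)]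
      fun t ↦ (2 * Real.cosh t) ^ (2 * rho m₁ m₂ - q * (l.im + rho m₁ m₂)) := by
    refine (((isBigO_bfun_of_pos l hm ha).norm_left.rpow hq (.of_forall fun t ↦ ?_)).mul
      ((isBigO_Del m₁ m₂).mono le_top)).congr_right fun t ↦ ?_
    all_goals have := Real.cosh_pos t
    · exact Real.rpow_nonneg (by positivity) _
    · rw [← Real.rpow_mul (by positivity), ← Real.rpow_add (by positivity)]
      ring_nf
  exact integrableOn_of_isBigO_principal measurableSet_Ioi
    (measurable_norm_bfun_rpow_mul_Del m₁ m₂ l q).aestronglyMeasurable hO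
    (integrableOn_two_mul_cosh_rpow_Ioi (sub_neg.2 hlq) a)

theorem integrableOn_norm_bfun_mul_Del_Ioi (hm : 0 < m₁ + m₂) (hl : rho m₁ m₂ < l.im) :
    IntegrableOn (fun t ↦ ‖bfun m₁ m₂ l t‖ * Del m₁ m₂ t) (Ioi 0) := by
  rw [← Ioc_union_Ioi_eq_Ioi zero_le_one]
  refine (integrableOn_norm_bfun_mul_Del_Ioc l hm 1).union ?_
  simpa only [Real.rpow_one] using
    integrableOn_norm_bfun_rpow_mul_Del_Ioi l hm zero_le_one (by linarith) one_pos

theorem exists_lt_two_integrableOn_norm_bfun_rpow_mul_Del_Ioi (hm : 0 < m₁ + m₂)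
    (hl : 0 < l.im) {a : ℝ} (ha : 0 < a) :
    ∃ p : ℝ, 1 ≤ p ∧ p < 2 ∧
      IntegrableOn (fun t ↦ ‖bfun m₁ m₂ l t‖ ^ p * Del m₁ m₂ t) (Ioi a) := by
  have hrho : 0 ≤ rho m₁ m₂ := by unfold rho; positivity
  have hsum : 0 < l.im + rho m₁ m₂ := by positivity
  have hcrit : 2 * rho m₁ m₂ / (l.im + rho m₁ m₂) < 2 := (div_lt_iff₀ hsum).2 (by linarith)
  obtain ⟨p, hp, hp2⟩ := exists_between (max_lt one_lt_two hcrit)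
  obtain ⟨hp1, hlp⟩ := max_lt_iff.1 hp
  exact ⟨p, hp1.le, hp2, integrableOn_norm_bfun_rpow_mul_Del_Ioi l hm (by positivity)
    ((div_lt_iff₀ hsum).1 hlp) ha⟩

end

theorem stmt3 (m₁ m₂ : ℕ) (hm₁ : 1 ≤ m₁) (l : ℂ) (hl : 0 < l.im) :
    IntegrableOn (fun t : ℝ => ‖bfun m₁ m₂ l t‖ * Del m₁ m₂ t) (Set.Ioc 0 (1 / 2)) ∧
    (rho m₁ m₂ < l.im →
      IntegrableOn (fun t : ℝ => ‖bfun m₁ m₂ l t‖ * Del m₁ m₂ t) (Set.Ioi 0)) ∧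
    IntegrableOn (fun t : ℝ => ‖bfun m₁ m₂ l t‖ ^ 2 * Del m₁ m₂ t) (Set.Ioi (1 / 2)) ∧
    ∃ p : ℝ, 1 ≤ p ∧ p < 2 ∧
      IntegrableOn (fun t : ℝ => ‖bfun m₁ m₂ l t‖ ^ p * Del m₁ m₂ t) (Set.Ioi (1 / 2)) := by
  have hm : 0 < m₁ + m₂ := by omega
  refine ⟨integrableOn_norm_bfun_mul_Del_Ioc l hm _, integrableOn_norm_bfun_mul_Del_Ioi l hm, ?_,
    exists_lt_two_integrableOn_norm_bfun_rpow_mul_Del_Ioi l hm hl one_half_pos⟩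
  simpa only [Real.rpow_two] using
    integrableOn_norm_bfun_rpow_mul_Del_Ioi l hm zero_le_two (by linarith) one_half_pos

end
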